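/- Assume the data matrix D ∈ ℝ^{d×n} has full row rank d, and fix the biases to zero. If F¹ ∈ ℝ^{d×c} and F² ∈ ℝ^{d×c} are both global minimizers of F ↦ L(F, 0, D, y), then there exists a vector v ∈ ℝ^d such that F¹ − F² = v·1_cᵀ, i.e., every column of F¹ − F² equals the same vector v. -/

import Mathlib

open Matrix Finset Real

/-- Softmax cross-entropy loss `L(F, b, D, y) = -∑ i, log p_i(y_i)`. -/
noncomputable def celoss {d n c : ℕ} (D : Matrix (Fin d) (Fin n) ℝ) (y : Fin n → Fin c)
    (F : Matrix (Fin d) (Fin c) ℝ) (b : Fin c → ℝ) : ℝ :=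
  -∑ i : Fin n, Real.log
    (Real.exp ((∑ u : Fin d, D u i * F u (y i)) + b (y i)) /
     ∑ j : Fin c, Real.exp ((∑ u : Fin d, D u i * F u j) + b j))

/-! Log-sum-exp is convex, and strictly so along every segment whose endpoints do not differ by a
constant: this is strict convexity of `exp`, summed over coordinates after normalizing each endpoint
so that its exponentials sum to `1`. Hence on the segment between two minimizers the logits of every
sample can change only by a constant over the classes, for otherwise an interior point would have a
smaller loss. So `Dᵀ (F₁ - F₂)` has constant rows, and injectivity of `Dᵀ` makes the columns of
`F₁ - F₂` equal. -/

section LogSumExp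

variable {ι : Type*} [Fintype ι]

/-- The log-partition function `log ∑ j, exp (z j)`, the logarithm of the softmax denominator. -/
noncomputable def logSumExp (z : ι → ℝ) : ℝ :=
  log (∑ j, exp (z j))

theorem sum_exp_pos [Nonempty ι] (z : ι → ℝ) : 0 < ∑ j, exp (z j) :=
  sum_pos (fun j _ ↦ exp_pos (z j)) univ_nonempty

theorem sum_exp_sub (z : ι → ℝ) (r : ℝ) : ∑ j, exp (z j - r) = (∑ j, exp (z j)) / exp r := by
  simp only [exp_sub, sum_div]

theorem sum_exp_sub_logSumExp [Nonempty ι] (z : ι → ℝ) : ∑ j, exp (z j - logSumExp z) = 1 := by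
  rw [sum_exp_sub, logSumExp, exp_log (sum_exp_pos z), div_self (sum_exp_pos z).ne']

theorem logSumExp_le_iff [Nonempty ι] {z : ι → ℝ} {r : ℝ} :
    logSumExp z ≤ r ↔ ∑ j, exp (z j - r) ≤ 1 := by
  rw [sum_exp_sub, div_le_one (exp_pos r), logSumExp, log_le_iff_le_exp (sum_exp_pos z)]

theorem logSumExp_lt_iff [Nonempty ι] {z : ι → ℝ} {r : ℝ} :
    logSumExp z < r ↔ ∑ j, exp (z j - r) < 1 := by
  rw [sum_exp_sub, div_lt_one (exp_pos r), logSumExp, log_lt_iff_lt_exp (sum_exp_pos z)]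

theorem sum_convexCombo_exp_sub_logSumExp [Nonempty ι] {s t : ℝ} (hst : s + t = 1)
    (z w : ι → ℝ) :
    ∑ j, (s * exp (z j - logSumExp z) + t * exp (w j - logSumExp w)) = 1 := by
  rw [sum_add_distrib, ← mul_sum, ← mul_sum, sum_exp_sub_logSumExp, sum_exp_sub_logSumExp,
    mul_one, mul_one, hst]

theorem convexOn_logSumExp [Nonempty ι] :
    ConvexOn ℝ Set.univ (logSumExp : (ι → ℝ) → ℝ) := by
  refine ⟨convex_univ, fun z _ w _ s t hs ht hst ↦ ?_⟩
  rw [logSumExp_le_iff, ← sum_convexCombo_exp_sub_logSumExp hst z w]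
  refine sum_le_sum fun j _ ↦ ?_
  calc exp ((s • z + t • w) j - (s • logSumExp z + t • logSumExp w))
      = exp (s * (z j - logSumExp z) + t * (w j - logSumExp w)) := by
        simp only [Pi.add_apply, Pi.smul_apply, smul_eq_mul]; ring_nf
    _ ≤ s * exp (z j - logSumExp z) + t * exp (w j - logSumExp w) :=
        convexOn_exp.2 (Set.mem_univ _) (Set.mem_univ _) hs ht hst

theorem logSumExp_convexCombo_lt {z w : ι → ℝ} {j k : ι} (hjk : z j - w j ≠ z k - w k)
    {s t : ℝ} (hs : 0 < s) (ht : 0 < t) (hst : s + t = 1) :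
    logSumExp (s • z + t • w) < s * logSumExp z + t * logSumExp w := by
  have : Nonempty ι := ⟨j⟩
  have exp_split (l : ι) : exp ((s • z + t • w) l - (s * logSumExp z + t * logSumExp w)) =
      exp (s * (z l - logSumExp z) + t * (w l - logSumExp w)) := by
    simp only [Pi.add_apply, Pi.smul_apply, smul_eq_mul]; ring_nf
  obtain ⟨l, hl⟩ : ∃ l, z l - logSumExp z ≠ w l - logSumExp w := by
    by_contra! h
    exact hjk (by linarith [h j, h k])
  rw [logSumExp_lt_iff, ← sum_convexCombo_exp_sub_logSumExp hst z w]
  simp only [exp_split]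
  exact sum_lt_sum
    (fun l _ ↦ convexOn_exp.2 (Set.mem_univ _) (Set.mem_univ _) hs.le ht.le hst)
    ⟨l, mem_univ l, strictConvexOn_exp.2 (Set.mem_univ _) (Set.mem_univ _) hl hs ht hst⟩

end LogSumExp

section Logits

variable {m n κ : Type*} [Fintype m]

/-- The matrix of scores `d_iᵀ f_j + b_j`, with one row per sample and one column per class. -/
def logits (D : Matrix m n ℝ) (F : Matrix m κ ℝ) (b : κ → ℝ) : Matrix n κ ℝ :=
  Dᵀ * F + replicateRow n b

theorem logits_sub_logits (D : Matrix m n ℝ) (F G : Matrix m κ ℝ) (b : κ → ℝ) :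
    logits D F b - logits D G b = Dᵀ * (F - G) := by
  rw [logits, logits, add_sub_add_right_eq_sub, Matrix.mul_sub]

theorem logits_convexCombo (D : Matrix m n ℝ) (F G : Matrix m κ ℝ) (b : κ → ℝ) {s t : ℝ}
    (hst : s + t = 1) :
    logits D (s • F + t • G) b = s • logits D F b + t • logits D G b := by
  have hb : s • replicateRow n b + t • replicateRow n b = replicateRow n b := by
    rw [← add_smul, hst, one_smul]
  rw [logits, logits, logits, Matrix.mul_add, Matrix.mul_smul, Matrix.mul_smul, smul_add, smul_add,
    add_add_add_comm, hb]

end Logits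

section FullRank

variable {m n κ R : Type*}

theorem mul_transpose_eq_sum_vecMulVec [Fintype n] [NonUnitalNonAssocSemiring R]
    (D : Matrix m n R) : D * Dᵀ = ∑ i, vecMulVec (D.col i) (D.col i) := by
  ext u w
  simp only [Matrix.sum_apply, vecMulVec_apply, mul_apply, transpose_apply, col_apply]

variable [Fintype m] [CommRing R]

theorem linearIndependent_row_of_gram_pos [Fintype n] [Preorder R] {D : Matrix m n R}
    (hD : ∀ v : m → R, v ≠ 0 → 0 < v ⬝ᵥ ((D * Dᵀ) *ᵥ v)) : LinearIndependent R D.row := by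
  rw [← vecMul_injective_iff, ← coe_vecMulLinear, injective_iff_map_eq_zero]
  intro v hv
  by_contra hv0
  refine (hD v hv0).ne' ?_
  rw [← mulVec_mulVec, mulVec_transpose, ← vecMulLinear_apply, hv, mulVec_zero, dotProduct_zero]

theorem col_eq_col_of_transpose_mul {D : Matrix m n R} (hD : LinearIndependent R D.row)
    {E : Matrix m κ R} {j k : κ} (hjk : (Dᵀ * E).col j = (Dᵀ * E).col k) :
    E.col j = E.col k :=
  mulVec_injective_iff.2 (col_transpose D ▸ hD) hjk

end FullRank

section CrossEntropy

variable {d n c : ℕ} {D : Matrix (Fin d) (Fin n) ℝ} {y : Fin n → Fin c}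

variable (D y) in
theorem celoss_eq_sum_logSumExp_sub (F : Matrix (Fin d) (Fin c) ℝ) (b : Fin c → ℝ) :
    celoss D y F b = ∑ i, (logSumExp (logits D F b i) - logits D F b i (y i)) := by
  rw [celoss, ← sum_neg_distrib]
  refine sum_congr rfl fun i _ ↦ ?_
  have : Nonempty (Fin c) := ⟨y i⟩
  change -log (exp (logits D F b i (y i)) / ∑ j, exp (logits D F b i j)) = _
  rw [log_div (exp_ne_zero _) (sum_exp_pos _).ne', log_exp, neg_sub, logSumExp]

theorem celoss_convexCombo_lt {F G : Matrix (Fin d) (Fin c) ℝ} {b : Fin c → ℝ}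
    {i : Fin n} {j k : Fin c}
    (hjk : logits D F b i j - logits D G b i j ≠ logits D F b i k - logits D G b i k)
    {s t : ℝ} (hs : 0 < s) (ht : 0 < t) (hst : s + t = 1) :
    celoss D y (s • F + t • G) b < s * celoss D y F b + t * celoss D y G b := by
  have : Nonempty (Fin c) := ⟨j⟩
  simp only [celoss_eq_sum_logSumExp_sub, mul_sum, ← sum_add_distrib,
    logits_convexCombo D F G b hst]
  have hrow (l : Fin n) : (s • logits D F b + t • logits D G b) l =
      s • logits D F b l + t • logits D G b l := rfl
  have hentry (l : Fin n) : (s • logits D F b l + t • logits D G b l) (y l) =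
      s * logits D F b l (y l) + t * logits D G b l (y l) := rfl
  simp only [hrow, hentry]
  refine sum_lt_sum (fun l _ ↦ ?_) ⟨i, mem_univ i, ?_⟩
  · have := convexOn_logSumExp.2 (Set.mem_univ (logits D F b l)) (Set.mem_univ (logits D G b l))
      hs.le ht.le hst
    simp only [smul_eq_mul] at this
    linarith
  · linarith [logSumExp_convexCombo_lt hjk hs ht hst]

theorem logits_sub_apply_eq_of_isMinOn {S : Set (Matrix (Fin d) (Fin c) ℝ)} (hS : Convex ℝ S)
    {b : Fin c → ℝ} {F G : Matrix (Fin d) (Fin c) ℝ} (hFS : F ∈ S) (hGS : G ∈ S)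
    (hF : IsMinOn (fun H ↦ celoss D y H b) S F) (hG : IsMinOn (fun H ↦ celoss D y H b) S G)
    (i : Fin n) (j k : Fin c) :
    logits D F b i j - logits D G b i j = logits D F b i k - logits D G b i k := by
  by_contra hjk
  have hlt := celoss_convexCombo_lt (y := y) hjk one_half_pos one_half_pos (add_halves 1)
  have hmid := hS hFS hGS one_half_pos.le one_half_pos.le (add_halves (1 : ℝ))
  linarith [isMinOn_iff.1 hF _ hmid, isMinOn_iff.1 hG _ hmid]

theorem multiverse_stmt5_general (hD : LinearIndependent ℝ D.row)
    {S : Set (Matrix (Fin d) (Fin c) ℝ)} (hS : Convex ℝ S)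
    {b : Fin c → ℝ} {F G : Matrix (Fin d) (Fin c) ℝ} (hFS : F ∈ S) (hGS : G ∈ S)
    (hF : IsMinOn (fun H ↦ celoss D y H b) S F) (hG : IsMinOn (fun H ↦ celoss D y H b) S G) :
    ∃ v : Fin d → ℝ, ∀ (j : Fin c) (u : Fin d), F u j - G u j = v u := by
  have hcol (j k : Fin c) : (F - G).col j = (F - G).col k := by
    refine col_eq_col_of_transpose_mul hD (funext fun i ↦ ?_)
    rw [← logits_sub_logits D F G b]
    exact logits_sub_apply_eq_of_isMinOn hS hFS hGS hF hG i j k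
  rcases isEmpty_or_nonempty (Fin c) with _ | ⟨⟨k⟩⟩
  · exact ⟨0, isEmptyElim⟩
  · exact ⟨(F - G).col k, fun j u ↦ congrFun (hcol j k) u⟩

end CrossEntropy

/-- If `D` has full row rank (`K = ∑ d_i d_iᵀ` positive definite) and `F¹, F²` are both
global minimizers of `F ↦ L(F, 0, D, y)`, then `F¹ − F² = v·1_cᵀ` for some `v`. -/
theorem multiverse_stmt5 {d n c : ℕ} (D : Matrix (Fin d) (Fin n) ℝ) (y : Fin n → Fin c)
    (hK : ∀ v : Fin d → ℝ, v ≠ 0 →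
      0 < v ⬝ᵥ ((∑ i : Fin n, Matrix.vecMulVec (fun u => D u i) (fun u => D u i)) *ᵥ v))
    (F1 F2 : Matrix (Fin d) (Fin c) ℝ)
    (hF1 : ∀ F : Matrix (Fin d) (Fin c) ℝ, celoss D y F1 0 ≤ celoss D y F 0)
    (hF2 : ∀ F : Matrix (Fin d) (Fin c) ℝ, celoss D y F2 0 ≤ celoss D y F 0) :
    ∃ v : Fin d → ℝ, ∀ (j : Fin c) (u : Fin d), F1 u j - F2 u j = v u := by
  have hD : LinearIndependent ℝ D.row :=
    linearIndependent_row_of_gram_pos (mul_transpose_eq_sum_vecMulVec D ▸ hK)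
  exact multiverse_stmt5_general hD convex_univ (Set.mem_univ F1) (Set.mem_univ F2)
    (fun F _ ↦ hF1 F) (fun F _ ↦ hF2 F)
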